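/- arXiv:2007.07526 — 3 statements merged into one kernel-verified Lean document; each statement's English description precedes it below -/
import Mathlib

section
/- Let O be a commutative ring, G a group, n ≥ 1, and A a G-graded O-algebra. Then the wreath product A≀Sₙ is a (G≀Sₙ)-graded O-algebra, with ((g₁,…,gₙ),σ)-component (A≀Sₙ)_{((g₁,…,gₙ),σ)} := (A_{g₁} ⊗ … ⊗ A_{gₙ}) ⊗ Oσ for each ((g₁,…,gₙ),σ) ∈ G≀Sₙ; that is, these O-submodules form a direct sum decomposition of A≀Sₙ and satisfy (A≀Sₙ)_x (A≀Sₙ)_y ⊆ (A≀Sₙ)_{xy} for all x, y ∈ G≀Sₙ. -/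
open scoped TensorProduct
open PiTensorProduct MulOpposite

/-- `𝒜` is a `G`-grading of the `O`-algebra `A`. -/
def IsAlgebraGrading (O : Type*) [CommRing O] {G : Type*} [Group G] {A : Type*}
    [Ring A] [Algebra O A] (𝒜 : G → Submodule O A) : Prop :=
  (1 : A) ∈ 𝒜 1 ∧
  (∀ ⦃g h : G⦄, ∀ a ∈ 𝒜 g, ∀ b ∈ 𝒜 h, a * b ∈ 𝒜 (g * h)) ∧
  (letI := Classical.decEq G; DirectSum.IsInternal 𝒜)

/-- The componentwise grading on a tensor product of graded modules: the
`(g₁,…,gₙ)`-component is spanned by the pure tensors of homogeneous elements. -/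
def tensorGrading (O : Type*) [CommRing O] {n : ℕ} {G : Fin n → Type*}
    {M : Fin n → Type*} [∀ i, AddCommGroup (M i)] [∀ i, Module O (M i)]
    (ℳ : ∀ i, G i → Submodule O (M i)) (g : ∀ i, G i) : Submodule O (⨂[O] i, M i) :=
  Submodule.span O {x | ∃ m : ∀ i, M i, (∀ i, m i ∈ ℳ i (g i)) ∧ x = tprod O m}

/-- The permutation action of `Sₙ` on `Gⁿ`, `^σ(g₁,…,gₙ) = (g_{σ⁻¹(1)},…,g_{σ⁻¹(n)})`. -/
def permMulAut (G : Type*) [Group G] (n : ℕ) :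
    Equiv.Perm (Fin n) →* MulAut (Fin n → G) where
  toFun σ :=
    { toEquiv := Equiv.arrowCongr σ (Equiv.refl G)
      map_mul' := fun _ _ => rfl }
  map_one' := by ext g i; rfl
  map_mul' := fun σ τ => by ext g i; rfl

/-- The wreath product `G ≀ Sₙ = Gⁿ ⋊ Sₙ`. -/
abbrev WreathGroup (G : Type*) [Group G] (n : ℕ) :=
  SemidirectProduct (Fin n → G) (Equiv.Perm (Fin n)) (permMulAut G n)

/-- `(e, s)` presents the `O`-algebra `W` as the wreath product `T ≀ Sₙ` of the
`O`-algebra `T` (typically `T = A^{⊗n}`, carrying an `Sₙ`-action `Φ`):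
`e` is injective, `W = ⊕_σ e(T)·s(σ)` as an `O`-module, and
`s(σ) e(t) = e(^σ t) s(σ)`. -/
def IsWreathPresentation (O : Type*) [CommRing O] {n : ℕ} {T W : Type*}
    [Ring T] [Algebra O T] [Ring W] [Algebra O W]
    (e : T →ₐ[O] W) (s : Equiv.Perm (Fin n) →* Wˣ)
    (Φ : Equiv.Perm (Fin n) →* (T ≃ₐ[O] T)) : Prop :=
  Function.Injective e ∧
  (letI := Classical.decEq (Equiv.Perm (Fin n));
    DirectSum.IsInternal fun σ : Equiv.Perm (Fin n) =>
      Submodule.map (LinearMap.mulRight O ((s σ : Wˣ) : W))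
        (Subalgebra.toSubmodule e.range)) ∧
  ∀ (σ : Equiv.Perm (Fin n)) (t : T),
    ((s σ : Wˣ) : W) * e t = e (Φ σ t) * ((s σ : Wˣ) : W)

/-- The `((g₁,…,gₙ),σ)`-component `(A_{g₁} ⊗ … ⊗ A_{gₙ}) ⊗ Oσ` of `A ≀ Sₙ`. -/
def wreathGrading (O : Type*) [CommRing O] {G : Type*} [Group G] {n : ℕ}
    {A W : Type*} [Ring A] [Algebra O A] [Ring W] [Algebra O W]
    (𝒜 : G → Submodule O A) (e : (⨂[O] _i : Fin n, A) →ₐ[O] W)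
    (s : Equiv.Perm (Fin n) →* Wˣ) (x : WreathGroup G n) : Submodule O W :=
  Submodule.map ((LinearMap.mulRight O ((s x.right : Wˣ) : W)).comp e.toLinearMap)
    (tensorGrading O (fun _ : Fin n => 𝒜) x.left)

theorem isInternal_of_proj {O ι M M' : Type*} [CommRing O] [DecidableEq ι]
    [AddCommGroup M] [Module O M] [AddCommGroup M'] [Module O M']
    (N : ι → Submodule O M) (P : ι → M →ₗ[O] M')
    (hinj : ∀ x, ∀ v ∈ N x, P x v = 0 → v = 0)
    (hz : ∀ x y, y ≠ x → ∀ v ∈ N y, P x v = 0)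
    (htop : iSup N = ⊤) : DirectSum.IsInternal N := by
  refine DirectSum.isInternal_submodule_of_iSupIndep_of_iSup_eq_top ?_ htop
  intro x
  rw [Submodule.disjoint_def]
  intro v hv hvs
  apply hinj x v hv
  have hle : (⨆ (j) (_ : j ≠ x), N j) ≤ LinearMap.ker (P x) :=
    iSup₂_le fun j hj w hw => hz x j hj w hw
  exact hle hvs

/-- projection onto a component -/
noncomputable def compProj {O ι M : Type*} [CommRing O] [DecidableEq ι]
    [AddCommGroup M] [Module O M] (N : ι → Submodule O M) (h : DirectSum.IsInternal N) (i : ι) :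
    M →ₗ[O] N i :=
  (DirectSum.component O ι (fun i => N i) i).comp
    (LinearEquiv.ofBijective (DirectSum.coeLinearMap N) h).symm.toLinearMap

theorem compProj_same {O ι M : Type*} [CommRing O] [DecidableEq ι]
    [AddCommGroup M] [Module O M] (N : ι → Submodule O M) (h : DirectSum.IsInternal N) (i : ι)
    (v : N i) : compProj N h i v = v := by
  have : (LinearEquiv.ofBijective (DirectSum.coeLinearMap N) h).symm (v : M)
      = DirectSum.lof O ι (fun i => N i) i v := by
    rw [LinearEquiv.symm_apply_eq]; exact (DirectSum.coeLinearMap_lof N _ _).symm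
  simp [compProj, this, DirectSum.component.lof_self]

theorem compProj_ne {O ι M : Type*} [CommRing O] [DecidableEq ι]
    [AddCommGroup M] [Module O M] (N : ι → Submodule O M) (h : DirectSum.IsInternal N) (i j : ι)
    (hij : j ≠ i) (v : M) (hv : v ∈ N j) : compProj N h i v = 0 := by
  have : (LinearEquiv.ofBijective (DirectSum.coeLinearMap N) h).symm v
      = DirectSum.lof O ι (fun i => N i) j ⟨v, hv⟩ := by
    rw [LinearEquiv.symm_apply_eq]; exact (DirectSum.coeLinearMap_lof N j ⟨v, hv⟩).symm
  simp [compProj, this, DirectSum.component.of, hij]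

section
variable {O : Type*} [CommRing O] {G : Type*} {n : ℕ} {A : Type*} [Ring A] [Algebra O A]

theorem tensorGrading_iSup [DecidableEq G] (𝒜 : G → Submodule O A) (h : DirectSum.IsInternal 𝒜) :
    (⨆ g : Fin n → G, tensorGrading O (fun _ : Fin n => 𝒜) g) = ⊤ := by
  classical
  rw [eq_top_iff, ← PiTensorProduct.span_tprod_eq_top, Submodule.span_le]
  rintro _ ⟨m, rfl⟩
  have hm : ∀ i, ∃ (S : Finset G) (c : G → A), (∀ g, c g ∈ 𝒜 g) ∧ m i = ∑ g ∈ S, c g := by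
    intro i
    obtain ⟨d, hd⟩ := h.2 (m i)
    refine ⟨DFinsupp.support d, fun g => d g, fun g => (d g).2, ?_⟩
    rw [← hd, DirectSum.coeAddMonoidHom_eq_dfinsuppSum]
    rfl
  choose S c hc hs using hm
  have : m = fun i => ∑ g ∈ S i, c i g := funext hs
  rw [this, MultilinearMap.map_sum_finset]
  refine Submodule.sum_mem _ fun g _ => ?_
  refine Submodule.mem_iSup_of_mem g (Submodule.subset_span ⟨_, fun i => hc i (g i), rfl⟩)

/-- projection of the tensor power -/
noncomputable def tProj [DecidableEq G] (𝒜 : G → Submodule O A) (h : DirectSum.IsInternal 𝒜)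
    (g : Fin n → G) : (⨂[O] _i : Fin n, A) →ₗ[O] (⨂[O] _i : Fin n, A) :=
  PiTensorProduct.map fun i => (𝒜 (g i)).subtype.comp (compProj 𝒜 h (g i))

theorem tProj_same [DecidableEq G] (𝒜 : G → Submodule O A) (h : DirectSum.IsInternal 𝒜)
    (g : Fin n → G) (t) (ht : t ∈ tensorGrading O (fun _ : Fin n => 𝒜) g) :
    tProj 𝒜 h g t = t := by
  induction ht using Submodule.span_induction with
  | mem x hx =>
    obtain ⟨m, hm, rfl⟩ := hx
    simp only [tProj, PiTensorProduct.map_tprod]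
    congr 1
    ext i
    have := compProj_same 𝒜 h (g i) ⟨m i, hm i⟩
    simp only [] at this
    simp [this]
  | zero => simp
  | add x y _ _ hx hy => rw [map_add, hx, hy]
  | smul a x _ hx => rw [map_smul, hx]

theorem tProj_ne [DecidableEq G] (𝒜 : G → Submodule O A) (h : DirectSum.IsInternal 𝒜)
    (g g' : Fin n → G) (hg : g' ≠ g) (t) (ht : t ∈ tensorGrading O (fun _ : Fin n => 𝒜) g') :
    tProj 𝒜 h g t = 0 := by
  induction ht using Submodule.span_induction with
  | mem x hx =>
    obtain ⟨m, hm, rfl⟩ := hx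
    obtain ⟨i, hi⟩ := Function.ne_iff.1 hg
    simp only [tProj, PiTensorProduct.map_tprod]
    apply MultilinearMap.map_coord_zero _ i
    simp [compProj_ne 𝒜 h (g i) (g' i) hi (m i) (hm i)]
  | zero => simp
  | add x y _ _ hx hy => rw [map_add, hx, hy, add_zero]
  | smul a x _ hx => rw [map_smul, hx, smul_zero]

theorem tensorGrading_mul [Group G] (𝒜 : G → Submodule O A)
    (hmul : ∀ ⦃g h : G⦄, ∀ a ∈ 𝒜 g, ∀ b ∈ 𝒜 h, a * b ∈ 𝒜 (g * h))
    (g h : Fin n → G) (t u : ⨂[O] _i : Fin n, A)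
    (ht : t ∈ tensorGrading O (fun _ : Fin n => 𝒜) g)
    (hu : u ∈ tensorGrading O (fun _ : Fin n => 𝒜) h) :
    t * u ∈ tensorGrading O (fun _ : Fin n => 𝒜) (g * h) := by
  have := Submodule.mul_mem_mul ht hu
  refine (?_ : tensorGrading O (fun _ : Fin n => 𝒜) g * tensorGrading O (fun _ : Fin n => 𝒜) h
    ≤ _) this
  rw [tensorGrading, tensorGrading, Submodule.span_mul_span, Submodule.span_le]
  rintro _ ⟨_, ⟨a, ha, rfl⟩, _, ⟨b, hb, rfl⟩, rfl⟩
  refine Submodule.subset_span ⟨a * b, fun i => hmul _ (ha i) _ (hb i), ?_⟩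
  simp [PiTensorProduct.tprod_mul_tprod]

theorem tensorGrading_perm [Group G] (𝒜 : G → Submodule O A)
    (Φ : Equiv.Perm (Fin n) →* ((⨂[O] _i : Fin n, A) ≃ₐ[O] (⨂[O] _i : Fin n, A)))
    (hΦ : ∀ (σ : Equiv.Perm (Fin n)) (a : Fin n → A),
      Φ σ (tprod O a) = tprod O (fun i => a (σ.symm i)))
    (σ : Equiv.Perm (Fin n)) (g : Fin n → G) (t : ⨂[O] _i : Fin n, A)
    (ht : t ∈ tensorGrading O (fun _ : Fin n => 𝒜) g) :
    Φ σ t ∈ tensorGrading O (fun _ : Fin n => 𝒜) (permMulAut G n σ g) := by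
  induction ht using Submodule.span_induction with
  | mem x hx =>
    obtain ⟨m, hm, rfl⟩ := hx
    exact Submodule.subset_span ⟨_, fun i => hm (σ.symm i), hΦ σ m⟩
  | zero => simp
  | add x y _ _ hx hy => rw [map_add]; exact add_mem hx hy
  | smul a x _ hx => rw [map_smul]; exact Submodule.smul_mem _ _ hx

end

theorem stmt6 (O : Type*) [CommRing O] (G : Type*) [Group G] (n : ℕ) (hn : 1 ≤ n)
    (A : Type*) [Ring A] [Algebra O A]
    (𝒜 : G → Submodule O A) (h𝒜 : IsAlgebraGrading O 𝒜)
    -- the permutation action of `Sₙ` on `A^{⊗n}`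
    (Φ : Equiv.Perm (Fin n) →* ((⨂[O] _i : Fin n, A) ≃ₐ[O] (⨂[O] _i : Fin n, A)))
    (hΦ : ∀ (σ : Equiv.Perm (Fin n)) (a : Fin n → A),
      Φ σ (tprod O a) = tprod O (fun i => a (σ.symm i)))
    -- the wreath product algebra `W = A ≀ Sₙ`
    (W : Type*) [Ring W] [Algebra O W]
    (e : (⨂[O] _i : Fin n, A) →ₐ[O] W) (s : Equiv.Perm (Fin n) →* Wˣ)
    (hW : IsWreathPresentation O e s Φ) :
    IsAlgebraGrading O (wreathGrading O 𝒜 e s) := by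
  obtain ⟨h1, hmul, hint⟩ := h𝒜
  obtain ⟨he, hWint, hcomm⟩ := hW
  refine ⟨?_, ?_, ?_⟩
  · refine ⟨1, Submodule.subset_span ⟨fun _ => 1, fun _ => h1, rfl⟩, ?_⟩
    simp
  · rintro x y _ ⟨t, ht, rfl⟩ _ ⟨u, hu, rfl⟩
    refine ⟨t * Φ x.right u, ?_, ?_⟩
    · exact tensorGrading_mul 𝒜 hmul _ _ _ _ ht (tensorGrading_perm 𝒜 Φ hΦ _ _ _ hu)
    · simp only [LinearMap.comp_apply, LinearMap.mulRight_apply, AlgHom.toLinearMap_apply,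
        SemidirectProduct.mul_right, map_mul, Units.val_mul]
      rw [mul_assoc (e t) _ (e u * _), ← mul_assoc _ (e u), hcomm]
      simp only [mul_assoc]
  · letI := Classical.decEq G
    letI := Classical.decEq (Equiv.Perm (Fin n))
    letI := Classical.decEq (WreathGroup G n)
    set L : Equiv.Perm (Fin n) → (⨂[O] _i : Fin n, A) →ₗ[O] W := fun σ =>
      (LinearMap.mulRight O ((s σ : Wˣ) : W)).comp e.toLinearMap with hL
    have hLinj : ∀ σ, Function.Injective (L σ) := by
      intro σ t u htu
      apply he
      exact (s σ).isUnit.mul_left_injective htu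
    have hfam : (fun σ : Equiv.Perm (Fin n) =>
      Submodule.map (LinearMap.mulRight O ((s σ : Wˣ) : W))
        (Subalgebra.toSubmodule e.range)) = fun σ => LinearMap.range (L σ) := by
      funext σ
      rw [hL, LinearMap.range_comp]
      rfl
    have hI : DirectSum.IsInternal fun σ => LinearMap.range (L σ) := by
      have h2 := hWint
      simp only [hfam] at h2
      exact h2
    let Q : Equiv.Perm (Fin n) → W →ₗ[O] (⨂[O] _i : Fin n, A) := fun σ =>
      (LinearEquiv.ofInjective (L σ) (hLinj σ)).symm.toLinearMap.comp (compProj _ hI σ)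
    have hQs : ∀ σ t, Q σ (L σ t) = t := by
      intro σ t
      have h3 := compProj_same _ hI σ ⟨L σ t, t, rfl⟩
      simp only [Q, LinearMap.comp_apply, LinearEquiv.coe_coe]
      rw [LinearEquiv.symm_apply_eq]
      exact h3
    have hQn : ∀ σ τ t, τ ≠ σ → Q σ (L τ t) = 0 := by
      intro σ τ t hne
      have h3 := compProj_ne _ hI σ τ hne (L τ t) ⟨t, rfl⟩
      simp only [Q, LinearMap.comp_apply, LinearEquiv.coe_coe]
      rw [h3, map_zero]
    refine isInternal_of_proj (wreathGrading O 𝒜 e s)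
      (fun x => (tProj 𝒜 hint x.left).comp (Q x.right)) ?_ ?_ ?_
    · rintro x _ ⟨t, ht, rfl⟩ h0
      change tProj 𝒜 hint x.left (Q x.right (L x.right t)) = 0 at h0
      rw [hQs, tProj_same 𝒜 hint _ _ ht] at h0
      rw [h0, map_zero]
    · rintro x y hne _ ⟨t, ht, rfl⟩
      change tProj 𝒜 hint x.left (Q x.right (L y.right t)) = 0
      by_cases hr : y.right = x.right
      · rw [hr, hQs]
        exact tProj_ne 𝒜 hint _ _ (fun hl => hne (SemidirectProduct.ext hl hr)) _ ht
      · rw [hQn _ _ _ hr, map_zero]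
    · rw [eq_top_iff, ← hI.submodule_iSup_eq_top]
      refine iSup_le fun σ => ?_
      rw [LinearMap.range_eq_map, ← tensorGrading_iSup 𝒜 hint, Submodule.map_iSup]
      exact iSup_le fun g => le_iSup (wreathGrading O 𝒜 e s) ⟨g, σ⟩
end

section
/- Let O be a commutative ring, G a group, n ≥ 1, C a G-graded G-acted O-algebra, and A a G-graded crossed product which is a G-graded algebra over C with structure map ζ : C → C_A(B), B = A₁. Then A≀Sₙ is a (G≀Sₙ)-graded algebra over C^{⊗n}, with structure map ζ_wr : C^{⊗n} → C_{A≀Sₙ}((A≀Sₙ)_1) given by ζ_wr(c₁ ⊗ … ⊗ cₙ) := (ζ(c₁) ⊗ … ⊗ ζ(cₙ)) ⊗ e. That is: the identity component of A≀Sₙ is B^{⊗n} ⊗ e; ζ_wr is an O-algebra homomorphism into the centralizer of B^{⊗n} ⊗ e in A≀Sₙ; ζ_wr maps (C^{⊗n})_{(g₁,…,gₙ)} into the ((g₁,…,gₙ),e)-component of A≀Sₙ; and ζ_wr(^{x}c) = ^{x}ζ_wr(c) for all x ∈ G≀Sₙ and c ∈ C^{⊗n}, where G≀Sₙ acts on the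 centralizer by conjugation with invertible homogeneous elements of A≀Sₙ and acts on C^{⊗n} by ^{((g₁,…,gₙ),σ)}(c₁ ⊗ … ⊗ cₙ) = (^{g₁}c_{σ⁻¹(1)}) ⊗ … ⊗ (^{gₙ}c_{σ⁻¹(n)}). -/
open scoped TensorProduct
open PiTensorProduct MulOpposite

/-- `𝒜` is a `G`-graded crossed product structure on the `O`-algebra `A`. -/
def IsCrossedProduct (O : Type*) [CommRing O] {G : Type*} [Group G] {A : Type*}
    [Ring A] [Algebra O A] (𝒜 : G → Submodule O A) : Prop :=
  IsAlgebraGrading O 𝒜 ∧ ∀ g : G, ∃ u : Aˣ, (u : A) ∈ 𝒜 g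

/-- `(𝒞, φ)` is a `G`-graded `G`-acted structure on the `O`-algebra `C`. -/
def IsGradedActedAlgebra (O : Type*) [CommRing O] {G : Type*} [Group G] {C : Type*}
    [Ring C] [Algebra O C] (𝒞 : G → Submodule O C) (φ : G →* (C ≃ₐ[O] C)) : Prop :=
  IsAlgebraGrading O 𝒞 ∧ ∀ (g h : G), ∀ c ∈ 𝒞 h, φ g c ∈ 𝒞 (g * h * g⁻¹)

/-- `ζ` makes the `G`-graded algebra `(A, 𝒜)` a graded algebra over `(C, 𝒞, φ)`. -/
def IsGradedAlgebraOver (O : Type*) [CommRing O] {G : Type*} [Group G]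
    {A C : Type*} [Ring A] [Algebra O A] [Ring C] [Algebra O C]
    (𝒜 : G → Submodule O A) (𝒞 : G → Submodule O C) (φ : G →* (C ≃ₐ[O] C))
    (ζ : C →ₐ[O] A) : Prop :=
  (∀ (c : C), ∀ b ∈ 𝒜 1, ζ c * b = b * ζ c) ∧
  (∀ g : G, ∀ c ∈ 𝒞 g, ζ c ∈ 𝒜 g) ∧
  (∀ (g : G) (u : Aˣ), (u : A) ∈ 𝒜 g → ∀ c : C, ζ (φ g c) = ↑u * ζ c * ↑u⁻¹)

theorem stmt9 (O : Type*) [CommRing O] (G : Type*) [Group G] (n : ℕ) (hn : 1 ≤ n)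
    (C : Type*) [Ring C] [Algebra O C]
    (𝒞 : G → Submodule O C) (φ : G →* (C ≃ₐ[O] C))
    (h𝒞 : IsGradedActedAlgebra O 𝒞 φ)
    (A : Type*) [Ring A] [Algebra O A]
    (𝒜 : G → Submodule O A) (h𝒜 : IsCrossedProduct O 𝒜)
    (ζ : C →ₐ[O] A) (hζ : IsGradedAlgebraOver O 𝒜 𝒞 φ ζ)
    -- the permutation action of `Sₙ` on `A^{⊗n}`
    (Φ : Equiv.Perm (Fin n) →* ((⨂[O] _i : Fin n, A) ≃ₐ[O] (⨂[O] _i : Fin n, A)))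
    (hΦ : ∀ (σ : Equiv.Perm (Fin n)) (a : Fin n → A),
      Φ σ (tprod O a) = tprod O (fun i => a (σ.symm i)))
    -- the wreath product algebra `W = A ≀ Sₙ`
    (W : Type*) [Ring W] [Algebra O W]
    (e : (⨂[O] _i : Fin n, A) →ₐ[O] W) (s : Equiv.Perm (Fin n) →* Wˣ)
    (hW : IsWreathPresentation O e s Φ)
    -- the action of `G ≀ Sₙ` on `C^{⊗n}`
    (Ψ : WreathGroup G n →* ((⨂[O] _i : Fin n, C) ≃ₐ[O] (⨂[O] _i : Fin n, C)))
    (hΨ : ∀ (x : WreathGroup G n) (c : Fin n → C),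
      Ψ x (tprod O c) = tprod O (fun i => φ (x.left i) (c (x.right.symm i)))) :
    -- the identity component of `A ≀ Sₙ` is `B^{⊗n} ⊗ e`
    wreathGrading O 𝒜 e s (1 : WreathGroup G n) =
      Submodule.map e.toLinearMap (tensorGrading O (fun _ : Fin n => 𝒜) (1 : Fin n → G)) ∧
    ∃ Zwr : (⨂[O] _i : Fin n, C) →ₐ[O] W,
      -- `ζ_wr(c₁ ⊗ … ⊗ cₙ) = (ζ(c₁) ⊗ … ⊗ ζ(cₙ)) ⊗ e`
      (∀ c : Fin n → C, Zwr (tprod O c) = e (tprod O (fun i => ζ (c i)))) ∧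
      -- `ζ_wr` takes values in the centralizer of the identity component of `A ≀ Sₙ`
      (∀ t : (⨂[O] _i : Fin n, C), ∀ b ∈ wreathGrading O 𝒜 e s (1 : WreathGroup G n),
        Zwr t * b = b * Zwr t) ∧
      -- `ζ_wr` maps `(C^{⊗n})_{(g₁,…,gₙ)}` into the `((g₁,…,gₙ),e)`-component
      (∀ g : Fin n → G, ∀ c ∈ tensorGrading O (fun _ : Fin n => 𝒞) g,
        Zwr c ∈ wreathGrading O 𝒜 e s ⟨g, 1⟩) ∧
      -- `ζ_wr` is `G ≀ Sₙ`-equivariant, where `G ≀ Sₙ` acts on the centralizer by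
      -- conjugation with invertible homogeneous elements of `A ≀ Sₙ`
      (∀ (x : WreathGroup G n) (v : Wˣ), (v : W) ∈ wreathGrading O 𝒜 e s x →
        ∀ c : (⨂[O] _i : Fin n, C), Zwr (Ψ x c) = ↑v * Zwr c * ↑v⁻¹) := by
  have key : ∀ (g : G) (m : A), m ∈ 𝒜 g → ∀ c : C, m * ζ c = ζ (φ g c) * m := by
    intro g m hm c
    obtain ⟨u, hu⟩ := h𝒜.2 g⁻¹
    have h1 : m * u ∈ 𝒜 1 := by
      have := h𝒜.1.2.1 m hm u hu
      rwa [mul_inv_cancel] at this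
    have h2 := hζ.2.2 g⁻¹ u hu (φ g c)
    have h3 : φ g⁻¹ (φ g c) = c := by
      rw [← AlgEquiv.mul_apply, ← map_mul, inv_mul_cancel, map_one, AlgEquiv.one_apply]
    rw [h3] at h2
    have h4 := hζ.1 (φ g c) _ h1
    calc m * ζ c = (m * u * ζ (φ g c)) * ↑u⁻¹ := by rw [h2]; simp only [mul_assoc]
      _ = ζ (φ g c) * m := by rw [← h4]; simp [mul_assoc]
  obtain ⟨-, -, hcomm⟩ := hW
  let Z0 : (⨂[O] _i : Fin n, C) →ₐ[O] (⨂[O] _i : Fin n, A) :=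
    AlgHom.ofLinearMap (PiTensorProduct.map (fun _ : Fin n => ζ.toLinearMap))
      (by
        rw [PiTensorProduct.one_def, PiTensorProduct.map_tprod, PiTensorProduct.one_def]
        congr 1; funext i; simp)
      (by
        intro x y
        induction x using PiTensorProduct.induction_on with
        | smul_tprod r x =>
          induction y using PiTensorProduct.induction_on with
          | smul_tprod q y =>
            simp only [smul_mul_assoc, mul_smul_comm, map_smul,
              PiTensorProduct.tprod_mul_tprod, PiTensorProduct.map_tprod]
            congr 3; funext i; simp
          | add a b ha hb => simp only [mul_add, map_add, ha, hb]
        | add a b ha hb => simp only [add_mul, map_add, ha, hb])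
  have hZ0 : ∀ c : Fin n → C, Z0 (tprod O c) = tprod O (fun i => ζ (c i)) := by
    intro c
    exact PiTensorProduct.map_tprod _ _
  have main : ∀ (x : WreathGroup G n), ∀ v ∈ wreathGrading O 𝒜 e s x,
      ∀ c : (⨂[O] _i : Fin n, C), v * e (Z0 c) = e (Z0 (Ψ x c)) * v := by
    intro x v hv c
    obtain ⟨t, ht, rfl⟩ := hv
    simp only [LinearMap.comp_apply, LinearMap.mulRight_apply, AlgHom.toLinearMap_apply]
    rw [mul_assoc, hcomm, ← mul_assoc, ← mul_assoc, ← map_mul, ← map_mul]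
    congr 2
    change t ∈ Submodule.span O _ at ht
    induction ht using Submodule.span_induction with
    | mem t ht =>
      obtain ⟨m, hm, rfl⟩ := ht
      induction c using PiTensorProduct.induction_on with
      | smul_tprod r c =>
        simp only [map_smul, hZ0, hΦ, hΨ, smul_mul_assoc, mul_smul_comm,
          PiTensorProduct.tprod_mul_tprod]
        congr 2; funext i
        exact key _ _ (hm i) _
      | add a b ha hb => simp only [mul_add, add_mul, map_add, ha, hb]
    | zero => simp
    | add a b _ _ ha hb => simp only [mul_add, add_mul, ha, hb]
    | smul r a _ ha => simp only [smul_mul_assoc, mul_smul_comm, ha]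
  have hone : ∀ g : Fin n → G, wreathGrading O 𝒜 e s (⟨g, 1⟩ : WreathGroup G n) =
      Submodule.map e.toLinearMap (tensorGrading O (fun _ : Fin n => 𝒜) g) := by
    intro g
    unfold wreathGrading
    congr 1
    ext t
    simp
  refine ⟨hone 1, e.comp Z0, ?_, ?_, ?_, ?_⟩
  · intro c
    rw [AlgHom.comp_apply, hZ0]
  · intro t b hb
    have := main 1 b hb t
    rw [map_one, AlgEquiv.one_apply] at this
    exact this.symm
  · intro g c hc
    rw [hone, AlgHom.comp_apply]
    refine Submodule.mem_map_of_mem ?_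
    change c ∈ Submodule.span O _ at hc
    induction hc using Submodule.span_induction with
    | mem t ht =>
      obtain ⟨m, hm, rfl⟩ := ht
      rw [hZ0]
      exact Submodule.subset_span ⟨_, fun i => hζ.2.1 _ _ (hm i), rfl⟩
    | zero => simp
    | add a b _ _ ha hb => rw [map_add]; exact add_mem ha hb
    | smul r a _ ha => rw [map_smul]; exact Submodule.smul_mem _ _ ha
  · intro x v hv c
    rw [AlgHom.comp_apply, AlgHom.comp_apply, main x v hv c]
    simp [mul_assoc]
end

section
/- Let O be a commutative ring, G a group, n ≥ 1, C a G-graded G-acted O-algebra, and let A, A' be G-graded crossed products over C. If M̃ is a G-graded (A,A')-bimodule over C, then the wreath product M̃≀Sₙ := M̃^{⊗n} ⊗ OSₙ is a (G≀Sₙ)-graded (A≀Sₙ, A'≀Sₙ)-bimodule over C^{⊗n}: its ((g₁,…,gₙ),σ)-component is (M̃_{g₁} ⊗ … ⊗ M̃_{gₙ}) ⊗ Oσ, one has (A≀Sₙ)_x (M̃≀Sₙ)_y (A'≀Sₙ)_z ⊆ (M̃≀Sₙ)_{xyz} for all x, y, z ∈ G≀Sₙ, the identity component of M̃≀Sₙ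 is M^{⊗n} where M := M̃_1, and for every homogeneous element m of degree x = ((g₁,…,gₙ),σ) and every c ∈ C^{⊗n} one has m c = (^{x}c) m. -/
open scoped TensorProduct
open PiTensorProduct MulOpposite

/-- An `(A, A')`-bimodule structure on the `O`-module `M`, encoded by a pair of
`O`-algebra maps `l : A →ₐ[O] Module.End O M` (the left action) and
`r : A'ᵐᵒᵖ →ₐ[O] Module.End O M` (the right action) whose images commute. -/
def IsBimodule (O : Type*) [CommRing O] {A A' M : Type*} [Ring A] [Algebra O A]
    [Ring A'] [Algebra O A'] [AddCommGroup M] [Module O M]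
    (l : A →ₐ[O] Module.End O M) (r : A'ᵐᵒᵖ →ₐ[O] Module.End O M) : Prop :=
  ∀ (a : A) (a' : A'ᵐᵒᵖ) (m : M), l a (r a' m) = r a' (l a m)

/-- `(M, ℳ, l, r)` is a `G`-graded `(A, A')`-bimodule over `C`. -/
def IsGradedBimoduleOver (O : Type*) [CommRing O] {G : Type*} [Group G]
    {A A' C M : Type*} [Ring A] [Algebra O A] [Ring A'] [Algebra O A']
    [Ring C] [Algebra O C] [AddCommGroup M] [Module O M]
    (𝒜 : G → Submodule O A) (𝒜' : G → Submodule O A')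
    (φ : G →* (C ≃ₐ[O] C)) (ζ : C →ₐ[O] A) (ζ' : C →ₐ[O] A')
    (ℳ : G → Submodule O M)
    (l : A →ₐ[O] Module.End O M) (r : A'ᵐᵒᵖ →ₐ[O] Module.End O M) : Prop :=
  IsBimodule O l r ∧
  (letI := Classical.decEq G; DirectSum.IsInternal ℳ) ∧
  (∀ (g x h : G), ∀ a ∈ 𝒜 g, ∀ m ∈ ℳ x, ∀ a' ∈ 𝒜' h,
      l a (r (op a') m) ∈ ℳ (g * x * h)) ∧
  (∀ (g : G) (c : C), ∀ m ∈ ℳ g, r (op (ζ' c)) m = l (ζ (φ g c)) m)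

/-- The wreath product module `M ≀ Sₙ := M^{⊗n} ⊗ OSₙ`. -/
abbrev WreathModule (O : Type*) [CommRing O] (n : ℕ) (M : Type*)
    [AddCommGroup M] [Module O M] : Type _ :=
  (⨂[O] _i : Fin n, M) ⊗[O] MonoidAlgebra O (Equiv.Perm (Fin n))

/-- The embedding `M^{⊗n} → M ≀ Sₙ`, `x ↦ x ⊗ σ`. -/
noncomputable def wreathModuleEmb (O : Type*) [CommRing O] {n : ℕ} (M : Type*)
    [AddCommGroup M] [Module O M] (σ : Equiv.Perm (Fin n)) :
    (⨂[O] _i : Fin n, M) →ₗ[O] WreathModule O n M :=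
  (TensorProduct.mk O (⨂[O] _i : Fin n, M) (MonoidAlgebra O (Equiv.Perm (Fin n)))).flip
    (MonoidAlgebra.single σ 1)

/-- The `((g₁,…,gₙ),σ)`-component `(M_{g₁} ⊗ … ⊗ M_{gₙ}) ⊗ Oσ` of `M ≀ Sₙ`. -/
noncomputable def wreathModuleGrading (O : Type*) [CommRing O] {G : Type*} [Group G] {n : ℕ}
    {M : Type*} [AddCommGroup M] [Module O M] (ℳ : G → Submodule O M)
    (x : WreathGroup G n) : Submodule O (WreathModule O n M) :=
  Submodule.map (wreathModuleEmb O M x.right) (tensorGrading O (fun _ : Fin n => ℳ) x.left)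

theorem wr_isInternal_of_proj {O : Type*} [CommRing O] {ι N : Type*} [DecidableEq ι]
    [AddCommGroup N] [Module O N] (p : ι → Submodule O N) (P : ι → N →ₗ[O] N)
    (h1 : ∀ i, ∀ x ∈ p i, P i x = x) (h2 : ∀ i j, j ≠ i → ∀ x ∈ p j, P i x = 0)
    (hs : ⨆ i, p i = ⊤) : DirectSum.IsInternal p := by
  refine DirectSum.isInternal_submodule_of_iSupIndep_of_iSup_eq_top ?_ hs
  rw [iSupIndep_def]
  intro i
  rw [Submodule.disjoint_def]
  intro x hx hx'
  have : (⨆ j, ⨆ (_ : j ≠ i), p j) ≤ LinearMap.ker (P i) :=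
    iSup_le fun j => iSup_le fun hj x hx => h2 i j hj x hx
  rw [← h1 i x hx]
  exact this hx'

theorem wr_exists_proj {O : Type*} [CommRing O] {ι N : Type*} [DecidableEq ι]
    [AddCommGroup N] [Module O N] (p : ι → Submodule O N) (h : DirectSum.IsInternal p) :
    ∃ P : ι → N →ₗ[O] N, (∀ i, ∀ x ∈ p i, P i x = x) ∧
      (∀ i j, j ≠ i → ∀ x ∈ p j, P i x = 0) := by
  refine ⟨fun i => (p i).subtype ∘ₗ DirectSum.component O ι (fun i => p i) i ∘ₗ
    (LinearEquiv.ofBijective (DirectSum.coeLinearMap p) h).symm.toLinearMap, ?_, ?_⟩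
  · intro i x hx
    have := h.ofBijective_coeLinearMap_of_mem hx
    change ((((LinearEquiv.ofBijective (DirectSum.coeLinearMap p) h).symm x) i : p i) : N) = x
    rw [this]
  · intro i j hj x hx
    have := h.ofBijective_coeLinearMap_of_mem_ne hj hx
    change ((((LinearEquiv.ofBijective (DirectSum.coeLinearMap p) h).symm x) i : p i) : N) = 0
    rw [this]; rfl

theorem wr_exists_sum {O : Type*} [CommRing O] {ι N : Type*}
    [AddCommGroup N] [Module O N] (p : ι → Submodule O N) (h : ⨆ i, p i = ⊤) (x : N) :
    ∃ (s : Finset ι) (y : ι → N), (∀ i, y i ∈ p i) ∧ x = ∑ i ∈ s, y i := by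
  classical
  have hx : x ∈ ⨆ i, p i := h ▸ Submodule.mem_top
  rw [Submodule.mem_iSup_iff_exists_finsupp] at hx
  obtain ⟨f, hf, rfl⟩ := hx
  exact ⟨f.support, f, hf, rfl⟩

theorem wr_tensor_iSup {O : Type*} [CommRing O] {n : ℕ} {G M : Type*}
    [AddCommGroup M] [Module O M] (ℳ : G → Submodule O M) (h : ⨆ g, ℳ g = ⊤) :
    ⨆ g : Fin n → G, tensorGrading O (fun _ : Fin n => ℳ) g = ⊤ := by
  classical
  rw [eq_top_iff, ← PiTensorProduct.span_tprod_eq_top, Submodule.span_le]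
  rintro _ ⟨m, rfl⟩
  choose s y hy hm using fun i => wr_exists_sum ℳ h (m i)
  have : m = fun i => ∑ j ∈ s i, y i j := funext hm
  rw [this, MultilinearMap.map_sum_finset]
  refine Submodule.sum_mem _ fun r _ => ?_
  exact Submodule.mem_iSup_of_mem r (Submodule.subset_span ⟨_, fun i => hy i (r i), rfl⟩)

theorem wr_tensor_proj {O : Type*} [CommRing O] {n : ℕ} {G M : Type*}
    [AddCommGroup M] [Module O M] (ℳ : G → Submodule O M) (P : G → M →ₗ[O] M)
    (h1 : ∀ i, ∀ x ∈ ℳ i, P i x = x) (h2 : ∀ i j, j ≠ i → ∀ x ∈ ℳ j, P i x = 0) :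
    ∃ Q : (Fin n → G) → (⨂[O] _i : Fin n, M) →ₗ[O] (⨂[O] _i : Fin n, M),
      (∀ i, ∀ x ∈ tensorGrading O (fun _ : Fin n => ℳ) i, Q i x = x) ∧
      (∀ i j, j ≠ i → ∀ x ∈ tensorGrading O (fun _ : Fin n => ℳ) j, Q i x = 0) := by
  refine ⟨fun g => PiTensorProduct.map fun i => P (g i), ?_, ?_⟩
  · intro g x hx
    induction hx using Submodule.span_induction with
    | mem x hx =>
      obtain ⟨m, hm, rfl⟩ := hx
      rw [PiTensorProduct.map_tprod]
      congr 1
      funext i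
      exact h1 _ _ (hm i)
    | zero => simp
    | add x y _ _ hx hy => rw [map_add, hx, hy]
    | smul a x _ hx => rw [map_smul, hx]
  · intro g g' hg x hx
    obtain ⟨i, hi⟩ := Function.ne_iff.1 hg
    induction hx using Submodule.span_induction with
    | mem x hx =>
      obtain ⟨m, hm, rfl⟩ := hx
      rw [PiTensorProduct.map_tprod]
      exact MultilinearMap.map_coord_zero _ i (h2 _ _ hi _ (hm i))
    | zero => simp
    | add x y _ _ hx hy => rw [map_add, hx, hy, add_zero]
    | smul a x _ hx => rw [map_smul, hx, smul_zero]

/-- Linear maps out of `M ≀ Sₙ`. -/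
theorem wr_module_lift {O : Type*} [CommRing O] {n : ℕ} {M N : Type*}
    [AddCommGroup M] [Module O M] [AddCommGroup N] [Module O N]
    (f : Equiv.Perm (Fin n) → (⨂[O] _i : Fin n, M) →ₗ[O] N) :
    ∃ F : WreathModule O n M →ₗ[O] N, ∀ σ x, F (wreathModuleEmb O M σ x) = f σ x := by
  refine ⟨TensorProduct.lift (LinearMap.flip
    ((Finsupp.lsum O fun σ => LinearMap.toSpanSingleton O _ (f σ)) ∘ₗ
      (MonoidAlgebra.coeffLinearEquiv O).toLinearMap)), ?_⟩
  intro σ x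
  simp [wreathModuleEmb]

theorem wr_module_induction {O : Type*} [CommRing O] {n : ℕ} {M : Type*}
    [AddCommGroup M] [Module O M] {p : WreathModule O n M → Prop}
    (h : ∀ σ x, p (wreathModuleEmb O M σ x)) (hadd : ∀ x y, p x → p y → p (x + y))
    (z : WreathModule O n M) : p z := by
  have h0 : p 0 := by simpa using h 1 0
  induction z using TensorProduct.induction_on with
  | zero => exact h0
  | add x y hx hy => exact hadd x y hx hy
  | tmul x y =>
    induction y using MonoidAlgebra.induction_linear with
    | zero => simpa using h0
    | add f g hf hg => rw [TensorProduct.tmul_add]; exact hadd _ _ hf hg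
    | single σ a =>
      have : x ⊗ₜ[O] MonoidAlgebra.single σ a = wreathModuleEmb O M σ (a • x) := by
        change _ = (a • x) ⊗ₜ[O] MonoidAlgebra.single σ 1
        rw [TensorProduct.smul_tmul]
        simp
      rw [this]
      exact h _ _

theorem wr_module_ext {O : Type*} [CommRing O] {n : ℕ} {M N : Type*}
    [AddCommGroup M] [Module O M] [AddCommGroup N] [Module O N]
    {f g : WreathModule O n M →ₗ[O] N}
    (h : ∀ σ x, f (wreathModuleEmb O M σ x) = g (wreathModuleEmb O M σ x)) : f = g := by
  refine LinearMap.ext fun z => ?_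
  induction z using wr_module_induction with
  | h σ x => exact h σ x
  | hadd x y hx hy => rw [map_add, map_add, hx, hy]

theorem wr_module_internal {O : Type*} [CommRing O] {n : ℕ} {G M : Type*} [Group G]
    [AddCommGroup M] [Module O M] (ℳ : G → Submodule O M)
    (h : letI := Classical.decEq G; DirectSum.IsInternal ℳ) :
    letI := Classical.decEq (WreathGroup G n)
    DirectSum.IsInternal (wreathModuleGrading O (n := n) ℳ) := by
  let _ := Classical.decEq G
  let _ := Classical.decEq (WreathGroup G n)
  obtain ⟨P, hP1, hP2⟩ := wr_exists_proj ℳ h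
  obtain ⟨Q, hQ1, hQ2⟩ := wr_tensor_proj (n := n) ℳ P hP1 hP2
  choose F hF using fun x : WreathGroup G n => wr_module_lift (fun τ : Equiv.Perm (Fin n) =>
    if τ = x.right then wreathModuleEmb O M τ ∘ₗ Q x.left else 0)
  refine wr_isInternal_of_proj _ F ?_ ?_ ?_
  · rintro x _ ⟨y, hy, rfl⟩
    rw [hF, if_pos rfl, LinearMap.comp_apply, hQ1 _ _ hy]
  · rintro x x' hx _ ⟨y, hy, rfl⟩
    rw [hF]
    split_ifs with hr
    · have hl : x'.left ≠ x.left := fun hl => hx (SemidirectProduct.ext hl hr)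
      rw [LinearMap.comp_apply, hQ2 _ _ hl _ hy, map_zero]
    · rfl
  · rw [eq_top_iff]
    rintro z -
    induction z using wr_module_induction with
    | hadd x y hx hy => exact Submodule.add_mem _ hx hy
    | h σ x =>
      have hx : x ∈ ⨆ g : Fin n → G, tensorGrading O (fun _ : Fin n => ℳ) g := by
        rw [wr_tensor_iSup ℳ h.submodule_iSup_eq_top]; trivial
      obtain ⟨f, hf, rfl⟩ := (Submodule.mem_iSup_iff_exists_finsupp _ _).1 hx
      rw [Finsupp.sum, map_sum]
      refine Submodule.sum_mem _ fun g _ => ?_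
      exact Submodule.mem_iSup_of_mem (⟨g, σ⟩ : WreathGroup G n) ⟨_, hf g, rfl⟩

/-- The sum map `Tⁿ! → W`. -/
noncomputable def wrSum (O : Type*) [CommRing O] {n : ℕ} {T E : Type*}
    [Ring T] [Algebra O T] [Ring E] [Algebra O E]
    (f : T →ₐ[O] E) (p : Equiv.Perm (Fin n) → E) :
    (Equiv.Perm (Fin n) → T) →ₗ[O] E :=
  ∑ σ, LinearMap.mulRight O (p σ) ∘ₗ f.toLinearMap ∘ₗ LinearMap.proj σ

theorem wrSum_apply (O : Type*) [CommRing O] {n : ℕ} {T E : Type*}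
    [Ring T] [Algebra O T] [Ring E] [Algebra O E]
    (f : T →ₐ[O] E) (p : Equiv.Perm (Fin n) → E) (v : Equiv.Perm (Fin n) → T) :
    wrSum O f p v = ∑ σ, f (v σ) * p σ := by
  simp [wrSum]

theorem wrSum_single (O : Type*) [CommRing O] {n : ℕ} {T E : Type*}
    [Ring T] [Algebra O T] [Ring E] [Algebra O E]
    (f : T →ₐ[O] E) (p : Equiv.Perm (Fin n) → E) (σ : Equiv.Perm (Fin n)) (t : T) :
    wrSum O f p (Pi.single σ t) = f t * p σ := by
  rw [wrSum_apply, Finset.sum_eq_single σ]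
  · simp
  · intro τ _ h
    simp [Pi.single_eq_of_ne h]
  · simp

theorem wrSum_bijective {O : Type*} [CommRing O] {n : ℕ} {T W : Type*}
    [Ring T] [Algebra O T] [Ring W] [Algebra O W]
    {e : T →ₐ[O] W} {s : Equiv.Perm (Fin n) →* Wˣ}
    {Φ : Equiv.Perm (Fin n) →* (T ≃ₐ[O] T)} (hW : IsWreathPresentation O e s Φ) :
    Function.Bijective (wrSum O e fun σ => ((s σ : Wˣ) : W)) := by
  obtain ⟨he, hi, -⟩ := hW
  have hind := @DirectSum.IsInternal.submodule_iSupIndep _ _ _ (Classical.decEq _) _ _ _ _ hi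
  have htop := @DirectSum.IsInternal.submodule_iSup_eq_top _ _ _ (Classical.decEq _) _ _ _ _ hi
  constructor
  · rw [injective_iff_map_eq_zero]
    intro v hv
    rw [wrSum_apply] at hv
    have := (iSupIndep_iff_finsetSum_eq_zero_imp_eq_zero _).1 hind Finset.univ
      (fun σ => e (v σ) * s σ) (fun σ _ => ⟨e (v σ), ⟨v σ, rfl⟩, rfl⟩) hv
    funext σ
    have h := this σ (Finset.mem_univ _)
    rw [Units.mul_left_eq_zero] at h
    exact he (by rw [h]; simp)
  · rw [← LinearMap.range_eq_top, eq_top_iff, ← htop]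
    refine iSup_le ?_
    rintro σ _ ⟨_, ⟨t, rfl⟩, rfl⟩
    exact ⟨Pi.single σ t, wrSum_single O e (fun σ => ((s σ : Wˣ) : W)) σ t⟩

theorem wr_induction {O : Type*} [CommRing O] {n : ℕ} {T W : Type*}
    [Ring T] [Algebra O T] [Ring W] [Algebra O W]
    {e : T →ₐ[O] W} {s : Equiv.Perm (Fin n) →* Wˣ}
    {Φ : Equiv.Perm (Fin n) →* (T ≃ₐ[O] T)} (hW : IsWreathPresentation O e s Φ)
    {p : W → Prop} (h : ∀ t σ, p (e t * s σ)) (hadd : ∀ x y, p x → p y → p (x + y))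
    (w : W) : p w := by
  obtain ⟨v, rfl⟩ := (wrSum_bijective hW).2 w
  rw [wrSum_apply]
  refine Finset.sum_induction _ p hadd (by simpa using h 0 1) fun σ _ => h _ _

theorem wr_lift {O : Type*} [CommRing O] {n : ℕ} {T W E : Type*}
    [Ring T] [Algebra O T] [Ring W] [Algebra O W] [Ring E] [Algebra O E]
    {e : T →ₐ[O] W} {s : Equiv.Perm (Fin n) →* Wˣ}
    {Φ : Equiv.Perm (Fin n) →* (T ≃ₐ[O] T)} (hW : IsWreathPresentation O e s Φ)
    (f : T →ₐ[O] E) (p : Equiv.Perm (Fin n) →* E)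
    (h : ∀ σ t, p σ * f t = f (Φ σ t) * p σ) :
    ∃ L : W →ₐ[O] E, (∀ t, L (e t) = f t) ∧ ∀ σ, L (s σ : Wˣ) = p σ := by
  let K := LinearEquiv.ofBijective _ (wrSum_bijective hW)
  let L : W →ₗ[O] E := wrSum O f p ∘ₗ K.symm.toLinearMap
  have hL : ∀ t σ, L (e t * s σ) = f t * p σ := by
    intro t σ
    have : K.symm (e t * s σ) = Pi.single σ t := by
      rw [LinearEquiv.symm_apply_eq]
      exact (wrSum_single O e (fun σ => ((s σ : Wˣ) : W)) σ t).symm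
    change wrSum O f p (K.symm (e t * s σ)) = _
    rw [this, wrSum_single]
  have hLe : ∀ t, L (e t) = f t := fun t => by simpa using hL t 1
  have hLs : ∀ σ, L (s σ : Wˣ) = p σ := fun σ => by simpa using hL 1 σ
  refine ⟨AlgHom.ofLinearMap L (by simpa using hLe 1) ?_, hLe, hLs⟩
  intro x y
  induction x using wr_induction hW with
  | hadd x x' hx hx' => rw [add_mul, map_add, hx, hx', map_add, add_mul]
  | h t σ =>
    induction y using wr_induction hW with
    | hadd x x' hx hx' => rw [mul_add, map_add, hx, hx', map_add, mul_add]
    | h t' τ =>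
      have : e t * s σ * (e t' * s τ) = e (t * Φ σ t') * (s (σ * τ) : Wˣ) := by
        rw [map_mul, map_mul, Units.val_mul, mul_assoc, ← mul_assoc (s σ : W), hW.2.2]
        simp only [mul_assoc]
      rw [this, hL, hL, hL, map_mul, map_mul, mul_assoc (f t) (p σ), ← mul_assoc (p σ), h]
      simp only [mul_assoc]

theorem wr_pi_induction {O : Type*} [CommRing O] {n : ℕ} {M : Type*}
    [AddCommGroup M] [Module O M] {p : (⨂[O] _i : Fin n, M) → Prop}
    (tp : ∀ m : Fin n → M, p (tprod O m)) (hsmul : ∀ (c : O) x, p x → p (c • x))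
    (hadd : ∀ x y, p x → p y → p (x + y)) (z : ⨂[O] _i : Fin n, M) : p z :=
  PiTensorProduct.induction_on z (fun c m => hsmul c _ (tp m)) hadd

theorem stmt10 (O : Type*) [CommRing O] (G : Type*) [Group G] (n : ℕ) (hn : 1 ≤ n)
    (C : Type*) [Ring C] [Algebra O C]
    (𝒞 : G → Submodule O C) (φ : G →* (C ≃ₐ[O] C))
    (h𝒞 : IsGradedActedAlgebra O 𝒞 φ)
    (A A' : Type*) [Ring A] [Algebra O A] [Ring A'] [Algebra O A']
    (𝒜 : G → Submodule O A) (𝒜' : G → Submodule O A')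
    (h𝒜 : IsCrossedProduct O 𝒜) (h𝒜' : IsCrossedProduct O 𝒜')
    (ζ : C →ₐ[O] A) (hζ : IsGradedAlgebraOver O 𝒜 𝒞 φ ζ)
    (ζ' : C →ₐ[O] A') (hζ' : IsGradedAlgebraOver O 𝒜' 𝒞 φ ζ')
    -- the `G`-graded `(A,A')`-bimodule `M̃` over `C`
    (M : Type*) [AddCommGroup M] [Module O M]
    (ℳ : G → Submodule O M)
    (l : A →ₐ[O] Module.End O M) (r : A'ᵐᵒᵖ →ₐ[O] Module.End O M)
    (hM : IsGradedBimoduleOver O 𝒜 𝒜' φ ζ ζ' ℳ l r)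
    -- the permutation actions of `Sₙ` on `A^{⊗n}`, `A'^{⊗n}` and `M̃^{⊗n}`
    (Φ : Equiv.Perm (Fin n) →* ((⨂[O] _i : Fin n, A) ≃ₐ[O] (⨂[O] _i : Fin n, A)))
    (hΦ : ∀ (σ : Equiv.Perm (Fin n)) (a : Fin n → A),
      Φ σ (tprod O a) = tprod O (fun i => a (σ.symm i)))
    (Φ' : Equiv.Perm (Fin n) →* ((⨂[O] _i : Fin n, A') ≃ₐ[O] (⨂[O] _i : Fin n, A')))
    (hΦ' : ∀ (σ : Equiv.Perm (Fin n)) (a' : Fin n → A'),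
      Φ' σ (tprod O a') = tprod O (fun i => a' (σ.symm i)))
    (ΦM : Equiv.Perm (Fin n) →* ((⨂[O] _i : Fin n, M) ≃ₗ[O] (⨂[O] _i : Fin n, M)))
    (hΦM : ∀ (σ : Equiv.Perm (Fin n)) (m : Fin n → M),
      ΦM σ (tprod O m) = tprod O (fun i => m (σ.symm i)))
    -- the wreath product algebras `W = A ≀ Sₙ` and `W' = A' ≀ Sₙ`
    (W : Type*) [Ring W] [Algebra O W]
    (e : (⨂[O] _i : Fin n, A) →ₐ[O] W) (s : Equiv.Perm (Fin n) →* Wˣ)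
    (hW : IsWreathPresentation O e s Φ)
    (W' : Type*) [Ring W'] [Algebra O W']
    (e' : (⨂[O] _i : Fin n, A') →ₐ[O] W') (s' : Equiv.Perm (Fin n) →* W'ˣ)
    (hW' : IsWreathPresentation O e' s' Φ')
    -- the action of `G ≀ Sₙ` on `C^{⊗n}`
    (Ψ : WreathGroup G n →* ((⨂[O] _i : Fin n, C) ≃ₐ[O] (⨂[O] _i : Fin n, C)))
    (hΨ : ∀ (x : WreathGroup G n) (c : Fin n → C),
      Ψ x (tprod O c) = tprod O (fun i => φ (x.left i) (c (x.right.symm i))))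
    -- the componentwise structure maps `C^{⊗n} → A^{⊗n}`, `C^{⊗n} → A'^{⊗n}`
    (Z : (⨂[O] _i : Fin n, C) →ₐ[O] (⨂[O] _i : Fin n, A))
    (hZ : ∀ c : Fin n → C, Z (tprod O c) = tprod O (fun i => ζ (c i)))
    (Z' : (⨂[O] _i : Fin n, C) →ₐ[O] (⨂[O] _i : Fin n, A'))
    (hZ' : ∀ c : Fin n → C, Z' (tprod O c) = tprod O (fun i => ζ' (c i)))
    -- the componentwise `(A^{⊗n}, A'^{⊗n})`-bimodule structure on `M̃^{⊗n}`
    (Lb : (⨂[O] _i : Fin n, A) →ₐ[O] Module.End O (⨂[O] _i : Fin n, M))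
    (hLb : ∀ (a : Fin n → A) (m : Fin n → M),
      Lb (tprod O a) (tprod O m) = tprod O (fun i => l (a i) (m i)))
    (Rb : (⨂[O] _i : Fin n, A')ᵐᵒᵖ →ₐ[O] Module.End O (⨂[O] _i : Fin n, M))
    (hRb : ∀ (a' : Fin n → A') (m : Fin n → M),
      Rb (op (tprod O a')) (tprod O m) = tprod O (fun i => r (op (a' i)) (m i))) :
    ∃ (L : W →ₐ[O] Module.End O (WreathModule O n M))
      (R : W'ᵐᵒᵖ →ₐ[O] Module.End O (WreathModule O n M)),
      -- the actions of `A ≀ Sₙ` and `A' ≀ Sₙ` on `M̃ ≀ Sₙ` are the twisted ones: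
      (∀ (t : ⨂[O] _i : Fin n, A) (τ : Equiv.Perm (Fin n)) (x : ⨂[O] _i : Fin n, M),
        L (e t) (wreathModuleEmb O M τ x) = wreathModuleEmb O M τ (Lb t x)) ∧
      (∀ (σ τ : Equiv.Perm (Fin n)) (x : ⨂[O] _i : Fin n, M),
        L ((s σ : Wˣ) : W) (wreathModuleEmb O M τ x) =
          wreathModuleEmb O M (σ * τ) (ΦM σ x)) ∧
      (∀ (t' : ⨂[O] _i : Fin n, A') (τ : Equiv.Perm (Fin n)) (x : ⨂[O] _i : Fin n, M),
        R (op (e' t')) (wreathModuleEmb O M τ x) =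
          wreathModuleEmb O M τ (Rb (op (Φ' τ t')) x)) ∧
      (∀ (π τ : Equiv.Perm (Fin n)) (x : ⨂[O] _i : Fin n, M),
        R (op ((s' π : W'ˣ) : W')) (wreathModuleEmb O M τ x) =
          wreathModuleEmb O M (τ * π) x) ∧
      -- the identity component of `M̃ ≀ Sₙ` is `M^{⊗n}`, where `M = M̃_1`
      wreathModuleGrading O ℳ (1 : WreathGroup G n) =
        Submodule.map (wreathModuleEmb O M (1 : Equiv.Perm (Fin n)))
          (tensorGrading O (fun _ : Fin n => ℳ) (1 : Fin n → G)) ∧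
      -- `M̃ ≀ Sₙ` is a `(G ≀ Sₙ)`-graded `(A ≀ Sₙ, A' ≀ Sₙ)`-bimodule over `C^{⊗n}`
      IsGradedBimoduleOver O (wreathGrading O 𝒜 e s) (wreathGrading O 𝒜' e' s') Ψ
        (e.comp Z) (e'.comp Z') (wreathModuleGrading O ℳ) L R := by
    classical
  obtain ⟨hbim, hint, hgr, hcomp⟩ := hM
  have hΦL : ∀ σ t x, ΦM σ (Lb t x) = Lb (Φ σ t) (ΦM σ x) := by
    intro σ t x
    induction t using wr_pi_induction with
    | hsmul c t ht => simp only [map_smul, LinearMap.smul_apply, ht]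
    | hadd t u ht hu => simp only [map_add, LinearMap.add_apply, ht, hu]
    | tp a =>
      induction x using wr_pi_induction with
      | hsmul c t ht => simp only [map_smul, ht]
      | hadd t u ht hu => simp only [map_add, ht, hu]
      | tp m => rw [hLb, hΦ, hΦM, hΦM, hLb]
  have hΦR : ∀ σ t x, ΦM σ (Rb (op t) x) = Rb (op (Φ' σ t)) (ΦM σ x) := by
    intro σ t x
    induction t using wr_pi_induction with
    | hsmul c t ht => simp only [map_smul, op_smul, LinearMap.smul_apply, ht]
    | hadd t u ht hu => simp only [map_add, op_add, LinearMap.add_apply, ht, hu]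
    | tp a =>
      induction x using wr_pi_induction with
      | hsmul c t ht => simp only [map_smul, ht]
      | hadd t u ht hu => simp only [map_add, ht, hu]
      | tp m => rw [hRb, hΦ', hΦM, hΦM, hRb]
  have hLR : ∀ t t' x, Lb t (Rb (op t') x) = Rb (op t') (Lb t x) := by
    intro t t' x
    induction t using wr_pi_induction with
    | hsmul c t ht => simp only [map_smul, LinearMap.smul_apply, ht]
    | hadd t u ht hu => simp only [map_add, LinearMap.add_apply, ht, hu]
    | tp a =>
      induction t' using wr_pi_induction with
      | hsmul c t ht => simp only [map_smul, op_smul, LinearMap.smul_apply, ht]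
      | hadd t u ht hu => simp only [map_add, op_add, LinearMap.add_apply, ht, hu]
      | tp a' =>
        induction x using wr_pi_induction with
        | hsmul c t ht => simp only [map_smul, ht]
        | hadd t u ht hu => simp only [map_add, ht, hu]
        | tp m =>
          rw [hRb, hLb, hLb, hRb]
          congr 1
          funext i
          exact hbim _ _ _
  choose f1 hf1 using fun t : (⨂[O] _i : Fin n, A) =>
    wr_module_lift (fun τ => wreathModuleEmb O M τ ∘ₗ Lb t)
  choose p1 hp1 using fun σ : Equiv.Perm (Fin n) =>
    wr_module_lift (fun τ => wreathModuleEmb O M (σ * τ) ∘ₗ (ΦM σ).toLinearMap)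
  choose f2 hf2 using fun t : (⨂[O] _i : Fin n, A') =>
    wr_module_lift (fun τ => wreathModuleEmb O M τ ∘ₗ Rb (op (Φ' τ t)))
  choose p2 hp2 using fun π : Equiv.Perm (Fin n) =>
    wr_module_lift (fun τ => wreathModuleEmb O M (τ * π))
  simp only [LinearMap.comp_apply, LinearEquiv.coe_coe] at hf1 hp1 hf2 hp2
  let F1 : (⨂[O] _i : Fin n, A) →ₐ[O] Module.End O (WreathModule O n M) :=
    AlgHom.ofLinearMap
      { toFun := f1
        map_add' := fun t u => wr_module_ext fun τ x => by
          simp only [LinearMap.add_apply, hf1, map_add]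
        map_smul' := fun c t => wr_module_ext fun τ x => by
          simp only [LinearMap.smul_apply, hf1, map_smul, RingHom.id_apply] }
      (wr_module_ext fun τ x => by
        simp only [LinearMap.coe_mk, AddHom.coe_mk, hf1, map_one, Module.End.one_apply])
      (fun t u => wr_module_ext fun τ x => by
        simp only [LinearMap.coe_mk, AddHom.coe_mk, hf1, map_mul, Module.End.mul_apply])
  let P1 : Equiv.Perm (Fin n) →* Module.End O (WreathModule O n M) :=
    { toFun := p1
      map_one' := wr_module_ext fun τ x => by
        simp only [hp1, map_one, one_mul, Module.End.one_apply, LinearEquiv.coe_one, id]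
      map_mul' := fun σ ρ => wr_module_ext fun τ x => by
        simp only [hp1, map_mul, mul_assoc, Module.End.mul_apply, LinearEquiv.mul_apply] }
  let F2 : (⨂[O] _i : Fin n, A') →ₐ[O] (Module.End O (WreathModule O n M))ᵐᵒᵖ :=
    AlgHom.ofLinearMap
      { toFun := fun t => op (f2 t)
        map_add' := fun t u => by
          rw [← op_add]
          refine congrArg op (wr_module_ext fun τ x => ?_)
          simp only [LinearMap.add_apply, hf2, map_add, op_add]
        map_smul' := fun c t => by
          rw [RingHom.id_apply, ← op_smul]
          refine congrArg op (wr_module_ext fun τ x => ?_)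
          simp only [LinearMap.smul_apply, hf2, map_smul, op_smul] }
      (congrArg op (wr_module_ext fun τ x => by
        simp only [hf2, map_one, op_one, Module.End.one_apply]))
      (fun t u => congrArg op (wr_module_ext fun τ x => by
        simp only [hf2, map_mul, op_mul, Module.End.mul_apply,
          LinearMap.coe_mk, AddHom.coe_mk, unop_op]))
  let P2 : Equiv.Perm (Fin n) →* (Module.End O (WreathModule O n M))ᵐᵒᵖ :=
    { toFun := fun π => op (p2 π)
      map_one' := congrArg op (wr_module_ext fun τ x => by
        simp only [hp2, mul_one, Module.End.one_apply])
      map_mul' := fun σ ρ => congrArg op (wr_module_ext fun τ x => by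
        simp only [hp2, ← mul_assoc, Module.End.mul_apply, unop_op]) }
  have H1 : ∀ σ t, P1 σ * F1 t = F1 (Φ σ t) * P1 σ := fun σ t => wr_module_ext fun τ x => by
    change p1 σ (f1 t _) = f1 (Φ σ t) (p1 σ _)
    rw [hf1, hp1, hp1, hf1, hΦL]
  have H2 : ∀ σ t, P2 σ * F2 t = F2 (Φ' σ t) * P2 σ :=
    fun σ t => congrArg op (wr_module_ext fun τ x => by
      change f2 t (p2 σ _) = p2 σ (f2 (Φ' σ t) _)
      rw [hf2, hp2, hp2, hf2, map_mul]; rfl)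
  obtain ⟨L, hLe, hLs⟩ := wr_lift (E := Module.End O (WreathModule O n M)) hW F1 P1 H1
  obtain ⟨R', hRe, hRs⟩ :=
    wr_lift (E := (Module.End O (WreathModule O n M))ᵐᵒᵖ) hW' F2 P2 H2
  let R : W'ᵐᵒᵖ →ₐ[O] Module.End O (WreathModule O n M) :=
    (AlgEquiv.opOp O (Module.End O (WreathModule O n M))).symm.toAlgHom.comp (AlgHom.op R')
  have hRop : ∀ w, R (op w) = unop (R' w) := fun w => rfl
  have E1 : ∀ t τ x, L (e t) (wreathModuleEmb O M τ x) = wreathModuleEmb O M τ (Lb t x) := by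
    intro t τ x
    rw [hLe]; exact hf1 t τ x
  have E2 : ∀ σ τ x, L ((s σ : Wˣ) : W) (wreathModuleEmb O M τ x) =
      wreathModuleEmb O M (σ * τ) (ΦM σ x) := by
    intro σ τ x
    rw [hLs]; exact hp1 σ τ x
  have E3 : ∀ t' τ x, R (op (e' t')) (wreathModuleEmb O M τ x) =
      wreathModuleEmb O M τ (Rb (op (Φ' τ t')) x) := by
    intro t' τ x
    rw [hRop, hRe]; exact hf2 t' τ x
  have E4 : ∀ π τ x, R (op ((s' π : W'ˣ) : W')) (wreathModuleEmb O M τ x) =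
      wreathModuleEmb O M (τ * π) x := by
    intro π τ x
    rw [hRop, hRs]; exact hp2 π τ x
  have E12 : ∀ t σ τ x, L (e t * (s σ : Wˣ)) (wreathModuleEmb O M τ x) =
      wreathModuleEmb O M (σ * τ) (Lb t (ΦM σ x)) := by
    intro t σ τ x
    rw [map_mul, Module.End.mul_apply, E2, E1]
  have E34 : ∀ t' π τ x, R (op (e' t' * (s' π : W'ˣ))) (wreathModuleEmb O M τ x) =
      wreathModuleEmb O M (τ * π) (Rb (op (Φ' τ t')) x) := by
    intro t' π τ x
    rw [op_mul, map_mul, Module.End.mul_apply, E3, E4]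
  refine ⟨L, R, E1, E2, E3, E4, rfl, ?_, wr_module_internal ℳ hint, ?_, ?_⟩
  · intro a a' m
    induction a' using MulOpposite.rec' with
    | h a' =>
    induction a using wr_induction hW with
    | hadd x y hx hy => simp only [map_add, LinearMap.add_apply, hx, hy]
    | h t σ =>
      induction a' using wr_induction hW' with
      | hadd x y hx hy => simp only [map_add, op_add, LinearMap.add_apply, hx, hy]
      | h t' π =>
        induction m using wr_module_induction with
        | hadd x y hx hy => simp only [map_add, hx, hy]
        | h τ x =>
          rw [E34, E12, E12, E34, hΦR, hLR, map_mul, mul_assoc]; rfl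
  · rintro g x h _ ⟨t, ht, rfl⟩ _ ⟨m, hm, rfl⟩ _ ⟨t', ht', rfl⟩
    change L (e t * (s g.right : Wˣ)) (R (op (e' t' * (s' h.right : W'ˣ))) _) ∈ _
    rw [E34, E12, hΦR, ← mul_assoc]
    refine ⟨_, ?_, rfl⟩
    change _ ∈ tensorGrading O _ (g * x * h).left
    induction ht using Submodule.span_induction with
    | zero => simp only [map_zero, LinearMap.zero_apply, Submodule.zero_mem]
    | add y z _ _ hy hz =>
      simp only [map_add, LinearMap.add_apply]; exact Submodule.add_mem _ hy hz
    | smul c y _ hy => simp only [map_smul, LinearMap.smul_apply]; exact Submodule.smul_mem _ _ hy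
    | mem y hy =>
    obtain ⟨a, ha, rfl⟩ := hy
    induction ht' using Submodule.span_induction with
    | zero => simp only [map_zero, op_zero, LinearMap.zero_apply, Submodule.zero_mem]
    | add y z _ _ hy hz =>
      simp only [map_add, op_add, LinearMap.add_apply]; exact Submodule.add_mem _ hy hz
    | smul c y _ hy =>
      simp only [map_smul, op_smul, LinearMap.smul_apply]; exact Submodule.smul_mem _ _ hy
    | mem y hy =>
    obtain ⟨a', ha', rfl⟩ := hy
    induction hm using Submodule.span_induction with
    | zero => simp only [map_zero, Submodule.zero_mem]
    | add y z _ _ hy hz => simp only [map_add]; exact Submodule.add_mem _ hy hz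
    | smul c y _ hy => simp only [map_smul]; exact Submodule.smul_mem _ _ hy
    | mem y hy =>
    obtain ⟨m, hm, rfl⟩ := hy
    rw [hΦ', hΦ', hΦM, hRb, hLb]
    refine Submodule.subset_span ⟨_, fun i => ?_, rfl⟩
    exact hgr (g.left i) (x.left (g.right.symm i)) (h.left (x.right.symm (g.right.symm i)))
      _ (ha i) _ (hm _) _ (ha' _)
  · rintro x c _ ⟨m, hm, rfl⟩
    change R (op (e' (Z' c))) _ = L (e (Z (Ψ x c))) _
    rw [E3, E1]
    congr 1
    induction c using wr_pi_induction with
    | hsmul a c hc => simp only [map_smul, op_smul, LinearMap.smul_apply, hc]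
    | hadd c d hc hd => simp only [map_add, op_add, LinearMap.add_apply, hc, hd]
    | tp c =>
    induction hm using Submodule.span_induction with
    | zero => simp only [map_zero]
    | add y z _ _ hy hz => simp only [map_add, hy, hz]
    | smul a y _ hy => simp only [map_smul, hy]
    | mem y hy =>
    obtain ⟨m, hm, rfl⟩ := hy
    rw [hZ', hΦ', hRb, hΨ, hZ, hLb]
    congr 1
    funext i
    exact hcomp _ _ _ (hm i)
end
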